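/- Let f : ℝ → ℂ be integrable with Fourier representation β(z) = ∫_ℝ f(ξ) e^{izξ} dξ where |f(ξ)| ≤ M·(1+|ξ|²)^{−31/32} for all ξ. Fix c ∈ ℝ, t > 0, and a nonzero integer k with kt > 0. Then lim_{ε→0+} ∫_ℝ e^{−ikzt} β(z)/(c − z + iε) dz = −2πi·e^{−ikct}·∫_{ξ > kt} f(ξ) e^{icξ} dξ. -/

import Mathlib

/-!
The pole of `z ↦ 1 / (c - z + iε)` lies in the upper half-plane, so this function is, up to a
constant, the Fourier transform of a one-sided exponential: with `z = -2πw`,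
`1 / (c - z + iε) = -i * conj (𝓕 g w)` where `g s = 1_{s > 0} exp (-(ε + ic) s)`. In the same
variable, `exp (-iaz) β z = 𝓕 u w` where `u s = f (s + a)` and `a = kt`. Both `g` and `u` lie in
`L¹ ∩ L²` (here the bound on `f` is used), so Parseval's identity evaluates the integral exactly as
`-2πi ∫_{s > 0} exp ((ic - ε) s) f (s + a) ds`. As `ε → 0⁺` this converges by dominated convergence,
and the translation `ξ = s + a` gives the limit.

Parseval's identity replaces Fubini's theorem, since `β z / (c - z + iε)` is integrable only because
both factors are square integrable. Mathlib's Plancherel theorem concerns the Fourier transform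
extended by continuity to `L²`; it agrees almost everywhere with the Fourier integral on `L¹ ∩ L²`
because both give the same pairing with test functions.
-/

open Complex MeasureTheory Filter
open scoped FourierTransform ComplexConjugate

lemma memLp_two_of_integrable_of_bound {f : ℝ → ℂ} (hf : Integrable f) (C : ℝ)
    (hC : ∀ x, ‖f x‖ ≤ C) : MemLp f 2 := by
  rw [memLp_two_iff_integrable_sq_norm hf.1]
  refine (hf.norm.const_mul C).mono' (hf.1.norm.pow 2) (Eventually.of_forall fun x => ?_)
  rw [Real.norm_of_nonneg (by positivity), sq]
  exact mul_le_mul_of_nonneg_right (hC x) (norm_nonneg _)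

/-- On `L¹ ∩ L²`, the Fourier transform on `L²` is given by the Fourier integral. -/
lemma coeFn_fourier_toLp {f : ℝ → ℂ} (hf : Integrable f) (hf2 : MemLp f 2) :
    ((𝓕 (hf2.toLp f) : Lp ℂ 2 (volume : Measure ℝ)) : ℝ → ℂ) =ᵐ[volume] 𝓕 f := by
  have hcont : Continuous (𝓕 f) := VectorFourier.fourierIntegral_continuous
    Real.continuous_fourierChar continuous_inner hf
  refine ae_eq_of_integral_contDiff_smul_eq
    ((Lp.memLp _).locallyIntegrable (by norm_num)) hcont.locallyIntegrable ?_
  intro g hg hgc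
  have hg' : ContDiff ℝ (⊤ : ℕ∞) (fun x => (g x : ℂ)) := Complex.ofRealCLM.contDiff.comp hg
  have hgc' : HasCompactSupport (fun x => (g x : ℂ)) := hgc.comp_left Complex.ofReal_zero
  let φ : SchwartzMap ℝ ℂ := hgc'.toSchwartzMap hg'
  have hφ : ∀ x, φ x = (g x : ℂ) := fun x => rfl
  have h1 := congrArg (fun T : TemperedDistribution ℝ ℂ => T φ)
    (Lp.fourier_toTemperedDistribution_eq (hf2.toLp f))
  simp only [TemperedDistribution.fourier_apply, Lp.toTemperedDistribution_apply] at h1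
  have h2 : ∫ ξ, (𝓕 (φ : ℝ → ℂ)) ξ • f ξ = ∫ x, φ x • 𝓕 f x := by
    simpa using! VectorFourier.integral_fourierIntegral_smul_eq_flip (L := innerₗ ℝ)
      Real.continuous_fourierChar continuous_inner φ.integrable hf
  have h3 : ∫ ξ, (𝓕 φ) ξ • (hf2.toLp f) ξ = ∫ ξ, (𝓕 (φ : ℝ → ℂ)) ξ • f ξ := by
    refine integral_congr_ae ?_
    filter_upwards [hf2.coeFn_toLp] with x hx
    rw [hx, SchwartzMap.fourier_coe]
  rw [h3, h2] at h1
  simpa [hφ] using h1.symm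

/-- Parseval's identity for Fourier integrals of functions in `L¹ ∩ L²`. -/
lemma integral_conj_fourier_mul_fourier {f g : ℝ → ℂ} (hf : Integrable f) (hf2 : MemLp f 2)
    (hg : Integrable g) (hg2 : MemLp g 2) :
    ∫ w, conj (𝓕 g w) * 𝓕 f w = ∫ s, conj (g s) * f s := by
  have h := Lp.inner_fourier_eq (hg2.toLp g) (hf2.toLp f)
  rw [L2.inner_def, L2.inner_def] at h
  calc _ = _ := integral_congr_ae ?_
    _ = _ := h
    _ = _ := integral_congr_ae ?_
  · filter_upwards [coeFn_fourier_toLp hf hf2, coeFn_fourier_toLp hg hg2] with x h1 h2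
    rw [h1, h2, RCLike.inner_apply, mul_comm]
  · filter_upwards [hf2.coeFn_toLp, hg2.coeFn_toLp] with x h1 h2
    rw [h1, h2, RCLike.inner_apply, mul_comm]

lemma fourier_indicator_exp {b : ℂ} (hb : 0 < b.re) (w : ℝ) :
    𝓕 ((Set.Ioi (0 : ℝ)).indicator fun s : ℝ => Complex.exp (-b * s)) w
      = 1 / (b + 2 * Real.pi * w * I) := by
  have hre : (-(b + 2 * Real.pi * w * I)).re < 0 := by simpa using hb
  rw [Real.fourier_real_eq_integral_exp_smul]
  have : ∀ v : ℝ, Complex.exp (↑(-2 * Real.pi * v * w) * I) •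
      (Set.Ioi (0 : ℝ)).indicator (fun s : ℝ => Complex.exp (-b * s)) v
      = (Set.Ioi (0 : ℝ)).indicator
        (fun s : ℝ => Complex.exp (-(b + 2 * Real.pi * w * I) * s)) v := by
    intro v
    by_cases hv : v ∈ Set.Ioi (0 : ℝ)
    · rw [Set.indicator_of_mem hv, Set.indicator_of_mem hv, smul_eq_mul, ← Complex.exp_add]
      congr 1
      push_cast
      ring
    · rw [Set.indicator_of_notMem hv, Set.indicator_of_notMem hv, smul_zero]
  simp_rw [this]
  rw [integral_indicator measurableSet_Ioi, integral_exp_mul_complex_Ioi hre,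
    Complex.ofReal_zero, mul_zero, Complex.exp_zero, neg_div_neg_eq]

/-- The regularized integral in closed form, for fixed `ε > 0`. -/
lemma integral_regularized {f : ℝ → ℂ} (hf : Integrable f) (C : ℝ) (hC : ∀ x, ‖f x‖ ≤ C)
    (a c : ℝ) {ε : ℝ} (hε : 0 < ε) :
    ∫ z : ℝ, Complex.exp (-I * a * z) * (∫ ξ : ℝ, f ξ * Complex.exp (I * z * ξ))
        / ((c : ℂ) - z + ε * I)
      = -2 * Real.pi * I * ∫ s in Set.Ioi (0 : ℝ), Complex.exp ((I * c - ε) * s) * f (s + a) := by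
  set F : ℝ → ℂ := fun z => Complex.exp (-I * a * z) *
    (∫ ξ : ℝ, f ξ * Complex.exp (I * z * ξ)) / ((c : ℂ) - z + ε * I) with hF
  set b : ℂ := ε + I * c with hb
  have hbre : 0 < b.re := by simpa [hb] using hε
  set g : ℝ → ℂ := (Set.Ioi (0 : ℝ)).indicator fun s : ℝ => Complex.exp (-b * s) with hg
  set u : ℝ → ℂ := fun s => f (s + a) with hu
  have hui : Integrable u := hf.comp_add_right a
  have hu2 : MemLp u 2 := memLp_two_of_integrable_of_bound hui C fun x => hC _
  have hgi : Integrable g := (integrable_indicator_iff measurableSet_Ioi).2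
    (integrableOn_exp_mul_complex_Ioi (by simpa using hbre) 0)
  have hg2 : MemLp g 2 := by
    refine memLp_two_of_integrable_of_bound hgi 1 fun x => ?_
    by_cases hx : x ∈ Set.Ioi (0 : ℝ)
    · rw [hg, Set.indicator_of_mem hx, Complex.norm_exp, Real.exp_le_one_iff]
      have := mul_pos hbre hx
      simpa using this.le
    · rw [hg, Set.indicator_of_notMem hx]
      simp
  have hscale : ∫ z, F z = (2 * Real.pi : ℝ) * ∫ w, F (-(2 * Real.pi) * w) := by
    rw [Measure.integral_comp_mul_left F, abs_inv, abs_neg, abs_of_pos Real.two_pi_pos,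
      Complex.real_smul, ← mul_assoc, ← Complex.ofReal_mul,
      mul_inv_cancel₀ Real.two_pi_pos.ne']
    simp
  have hfourier : ∀ w, 𝓕 u w = Complex.exp (-I * a * (-(2 * Real.pi) * w : ℝ)) *
      ∫ ξ : ℝ, f ξ * Complex.exp (I * (-(2 * Real.pi) * w : ℝ) * ξ) := by
    intro w
    rw [Real.fourier_real_eq_integral_exp_smul, ← integral_const_mul,
      ← integral_add_right_eq_self (fun ξ : ℝ => Complex.exp (-I * a * (-(2 * Real.pi) * w : ℝ)) *
        (f ξ * Complex.exp (I * (-(2 * Real.pi) * w : ℝ) * ξ))) a]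
    refine integral_congr_ae (Eventually.of_forall fun s => ?_)
    simp only [hu, smul_eq_mul]
    rw [mul_left_comm, ← Complex.exp_add, mul_comm]
    congr 2
    push_cast
    ring
  have hpt : ∀ w, F (-(2 * Real.pi) * w) = -I * (conj (𝓕 g w) * 𝓕 u w) := by
    intro w
    have hne : (c : ℂ) - (-(2 * Real.pi) * w : ℝ) + ε * I ≠ 0 := fun h => by
      have := congrArg Complex.im h
      simp at this
      exact hε.ne' this
    have hne2 : conj (b + 2 * Real.pi * w * I)
        = -I * ((c : ℂ) - (-(2 * Real.pi) * w : ℝ) + ε * I) := by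
      simp only [hb, map_add, map_mul, Complex.conj_ofReal, Complex.conj_I, map_ofNat]
      push_cast
      linear_combination (ε : ℂ) * I_mul_I
    rw [hfourier w, hg, fourier_indicator_exp hbre, map_div₀, map_one, hne2, hF]
    field_simp
  rw [hscale]
  simp_rw [hpt]
  rw [integral_const_mul, integral_conj_fourier_mul_fourier hui hu2 hgi hg2,
    ← integral_indicator measurableSet_Ioi, ← mul_assoc]
  congr 1
  · push_cast
    ring
  · refine integral_congr_ae (Eventually.of_forall fun s => ?_)
    by_cases hs : s ∈ Set.Ioi (0 : ℝ)
    · simp only [hg, Set.indicator_of_mem hs, ← Complex.exp_conj, hb, map_mul, map_neg, map_add,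
        Complex.conj_ofReal, Complex.conj_I, hu]
      congr 2
      ring
    · simp [hg, Set.indicator_of_notMem hs]

theorem fourier_residue_limit
    (f : ℝ → ℂ) (hf : Integrable f) (M : ℝ)
    (hbound : ∀ ξ : ℝ, ‖f ξ‖ ≤ M * (1 + ξ^2) ^ (-(31:ℝ)/32))
    (β : ℝ → ℂ) (hβ : ∀ z : ℝ, β z = ∫ ξ : ℝ, f ξ * Complex.exp (I * z * ξ))
    (c t : ℝ) (ht : 0 < t) (k : ℤ) (hk : k ≠ 0) (hkt : 0 < (k:ℝ) * t) :
    Tendsto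
      (fun ε : ℝ =>
        ∫ z : ℝ, Complex.exp (-I * k * z * t) * β z / ((c:ℂ) - (z:ℂ) + (ε:ℂ) * I))
      (nhdsWithin 0 (Set.Ioi 0))
      (nhds (-2 * Real.pi * I * Complex.exp (-I * k * c * t)
        * ∫ ξ in Set.Ioi ((k:ℝ) * t), f ξ * Complex.exp (I * c * ξ))) := by
  set a : ℝ := (k : ℝ) * t with ha
  have hC : ∀ x, ‖f x‖ ≤ |M| := fun x => by
    have h1 : (1 + x ^ 2) ^ (-(31 : ℝ) / 32) ≤ 1 :=
      Real.rpow_le_one_of_one_le_of_nonpos (by nlinarith [sq_nonneg x]) (by norm_num)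
    have h0 : 0 ≤ (1 + x ^ 2) ^ (-(31 : ℝ) / 32) := by positivity
    calc ‖f x‖ ≤ M * (1 + x ^ 2) ^ (-(31 : ℝ) / 32) := hbound x
      _ ≤ |M| * 1 := mul_le_mul (le_abs_self M) h1 h0 (abs_nonneg M)
      _ = |M| := mul_one _
  have hlim : Tendsto (fun ε : ℝ => ∫ s in Set.Ioi (0 : ℝ),
        Complex.exp ((I * c - ε) * s) * f (s + a)) (nhdsWithin 0 (Set.Ioi 0))
      (nhds (∫ s in Set.Ioi (0 : ℝ), Complex.exp ((I * c - (0 : ℝ)) * s) * f (s + a))) := by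
    have hfa : Integrable (fun s => f (s + a)) := hf.comp_add_right a
    refine tendsto_integral_filter_of_dominated_convergence (fun s => ‖f (s + a)‖) ?_ ?_ ?_ ?_
    · refine Eventually.of_forall fun ε => AEStronglyMeasurable.mul ?_ hfa.1.restrict
      exact (by fun_prop : Continuous fun s : ℝ =>
        Complex.exp ((I * c - ε) * s)).aestronglyMeasurable
    · filter_upwards [self_mem_nhdsWithin] with ε hε
      filter_upwards [ae_restrict_mem measurableSet_Ioi] with s hs
      rw [norm_mul]
      refine mul_le_of_le_one_left (norm_nonneg _) ?_
      rw [Complex.norm_exp, Real.exp_le_one_iff]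
      have := mul_pos (Set.mem_Ioi.1 hε) (Set.mem_Ioi.1 hs)
      simpa using this.le
    · exact hfa.norm.restrict
    · refine Eventually.of_forall fun s => Tendsto.mono_left ?_ nhdsWithin_le_nhds
      exact (by fun_prop : Continuous fun ε : ℝ =>
        Complex.exp ((I * c - ε) * s) * f (s + a)).tendsto 0
  have hshift : -2 * Real.pi * I * Complex.exp (-I * k * c * t)
        * ∫ ξ in Set.Ioi a, f ξ * Complex.exp (I * c * ξ)
      = -2 * Real.pi * I *
        ∫ s in Set.Ioi (0 : ℝ), Complex.exp ((I * c - (0 : ℝ)) * s) * f (s + a) := by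
    rw [mul_assoc, ← integral_const_mul, ← integral_indicator measurableSet_Ioi,
      ← integral_indicator measurableSet_Ioi, ← integral_add_right_eq_self _ a]
    congr 1
    refine integral_congr_ae (Eventually.of_forall fun s => ?_)
    by_cases hs : 0 < s
    · have hs' : s + a ∈ Set.Ioi a := by simpa using hs
      simp only [Set.indicator_of_mem hs', Set.indicator_of_mem (Set.mem_Ioi.2 hs)]
      rw [mul_left_comm, ← Complex.exp_add, mul_comm]
      congr 2
      rw [ha]
      push_cast
      ring
    · have hs' : s + a ∉ Set.Ioi a := by simpa using hs
      simp only [Set.indicator_of_notMem hs',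
        Set.indicator_of_notMem (show s ∉ Set.Ioi (0 : ℝ) from hs)]
  rw [hshift]
  refine (hlim.const_mul _).congr' ?_
  filter_upwards [self_mem_nhdsWithin] with ε hε
  rw [← integral_regularized hf |M| hC a c hε]
  refine integral_congr_ae (Eventually.of_forall fun z => ?_)
  simp only [hβ, ha]
  congr 3
  push_cast
  ring
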